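/- arXiv:1607.07778 — 2 statements merged into one kernel-verified Lean document; each statement's English description precedes it below -/
import Mathlib

section
/- Suppose some I_j is a radical ideal of S with Krull dimension of S/I_j equal to 0. Then S is not a depiction of R: there exists a maximal ideal n of S such that the localization R_{n∩R} is a noetherian ring but R_{n∩R} ≠ S_n as subrings of the fraction field of S. -/
/-!
The ideal `n` can be any maximal ideal of `S` containing `I j`. Write `A = k + I j`.

*Noetherianity.* Since `S / I j` is a zero-dimensional finite type `k`-algebra, it is finite over
`k`; as `I j ⊆ A`, the ring `S` is then a finite `A`-module, and the Artin–Tate lemma shows that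
`A` is of finite type over `k`, hence noetherian (`isNoetherianRing_kPlus`). By coprimality there
is `f ∈ ⋂_{i ≠ j} I i` with `f ≡ 1` modulo `I j`. Then `f ∈ R`, `f ∉ n` and `f A ⊆ R`, so the
inclusion `R ⊆ A` becomes an isomorphism after localizing at `n`
(`isNoetherianRing_localization_of_le`).

*The two localizations differ.* Finite type `k`-algebras are Jacobson rings, so the radical
non-maximal ideal `I j` lies in a second maximal ideal `n' ≠ n`. For `s ∈ n' \ n` the fraction
`1 / s` is in `S_n`. An element of `A` lying in `n'` is in `I j`, hence in `n`, so `1 / s` has no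
denominator in `R` outside `n`.
-/

/-- The subring `k + I = {α·1 + b : α ∈ k, b ∈ I}` of `S`, as a `k`-subalgebra. -/
def kPlus (k : Type*) {S : Type*} [CommSemiring k] [CommRing S] [Algebra k S]
    (I : Ideal S) : Subalgebra k S where
  carrier := {s | ∃ (α : k) (b : S), b ∈ I ∧ s = algebraMap k S α + b}
  algebraMap_mem' := fun α => ⟨α, 0, I.zero_mem, by ring⟩
  add_mem' := by
    rintro x y ⟨α, b, hb, rfl⟩ ⟨β, c, hc, rfl⟩
    exact ⟨α + β, b + c, I.add_mem hb hc, by rw [map_add]; ring⟩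
  mul_mem' := by
    rintro x y ⟨α, b, hb, rfl⟩ ⟨β, c, hc, rfl⟩
    refine ⟨α * β, algebraMap k S α * c + algebraMap k S β * b + b * c, ?_, by rw [map_mul]; ring⟩
    exact I.add_mem (I.add_mem (I.mul_mem_left _ hc) (I.mul_mem_left _ hb)) (I.mul_mem_left _ hc)


/-- The localization of the subalgebra `T ⊆ S` at (the complement in `T` of) the prime `P` of
`S`, viewed as a subset of the fraction field of `S`. -/
def locOf {k S : Type*} [CommSemiring k] [CommRing S] [IsDomain S] [Algebra k S]
    (T : Subalgebra k S) (P : Ideal S) : Set (FractionRing S) :=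
  {x | ∃ a b : S, a ∈ T ∧ b ∈ T ∧ b ∉ P ∧
    x = algebraMap S (FractionRing S) a / algebraMap S (FractionRing S) b}

/-- The localization `S_P` of `S` at the prime `P`, viewed as a subset of the fraction field. -/
def locSAt (S : Type*) [CommRing S] [IsDomain S] (P : Ideal S) : Set (FractionRing S) :=
  {x | ∃ a b : S, b ∉ P ∧
    x = algebraMap S (FractionRing S) a / algebraMap S (FractionRing S) b}

theorem mem_kPlus_of_mem {k S : Type*} [CommSemiring k] [CommRing S] [Algebra k S] (I : Ideal S) {b : S}
    (hb : b ∈ I) : b ∈ kPlus k I :=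
  ⟨0, b, hb, by simp⟩

/-- If `f ∉ n` multiplies `A ⊇ R` into `R`, then `R` and `A` have the same localization at `n`,
so noetherianity of `A` passes to the localization of `R`. -/
theorem isNoetherianRing_localization_of_le {k S : Type*} [Field k] [CommRing S] [IsDomain S]
    [Algebra k S] {R A : Subalgebra k S} (hRA : R ≤ A) [IsNoetherianRing A]
    (n : Ideal S) [hn : n.IsPrime] (f : S) (hfn : f ∉ n)
    (hfA : ∀ a ∈ A, f * a ∈ R) :
    IsNoetherianRing
      (Localization
        (@Ideal.primeCompl _ _ (n.comap R.val) (Ideal.IsPrime.comap R.val (hK := hn)))) := by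
  have : (n.comap R.val).IsPrime := Ideal.IsPrime.comap R.val
  have : (n.comap A.val).IsPrime := Ideal.IsPrime.comap A.val
  let g : R →+* A := (Subalgebra.inclusion hRA).toRingHom
  have hcomap : n.comap R.val = (n.comap A.val).comap g := rfl
  obtain ⟨φ, hφ⟩ : ∃ φ, φ = Localization.localRingHom (n.comap R.val) (n.comap A.val) g hcomap :=
    ⟨_, rfl⟩
  have hinj : Function.Injective φ := by
    rw [injective_iff_map_eq_zero]
    intro x hx
    obtain ⟨r, s, rfl⟩ := IsLocalization.exists_mk'_eq (n.comap R.val).primeCompl x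
    rw [hφ, Localization.localRingHom_mk', IsLocalization.mk'_eq_zero_iff] at hx
    obtain ⟨t, ht⟩ := hx
    have ht0 : (t : A) ≠ 0 := fun h => t.2 (by rw [h]; exact zero_mem _)
    have hr : g r = 0 := (mul_eq_zero.mp ht).resolve_left ht0
    have hr' : r = 0 := Subtype.ext (congrArg A.val hr :)
    rw [hr', IsLocalization.mk'_zero]
  have hsurj : Function.Surjective φ := by
    intro x
    obtain ⟨a, s, rfl⟩ := IsLocalization.exists_mk'_eq (n.comap A.val).primeCompl x
    -- `a / s = (f a) / (f s)`, and the right-hand side is a fraction of elements of `R`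
    have hs : (⟨f * s.1.1, hfA _ s.1.2⟩ : R) ∈ (n.comap R.val).primeCompl := fun h =>
      (hn.mem_or_mem (show f * s.1.1 ∈ n from h)).elim hfn s.2
    refine ⟨IsLocalization.mk' _ ⟨f * a.1, hfA _ a.2⟩ ⟨_, hs⟩, ?_⟩
    rw [hφ, Localization.localRingHom_mk', IsLocalization.mk'_eq_iff_eq]
    congr 1
    apply Subtype.ext
    change s.1.1 * (f * a.1) = (f * s.1.1) * a.1
    ring
  exact isNoetherianRing_of_ringEquiv _ (RingEquiv.ofBijective φ ⟨hinj, hsurj⟩).symm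

/-- `k + I` is noetherian when `S / I` is zero-dimensional: `S / I` is then finite over `k`, so `S`
is finite over `k + I`, and the Artin–Tate lemma applies to `k ⊆ k + I ⊆ S`. -/
theorem isNoetherianRing_kPlus {k S : Type*} [Field k] [CommRing S] [Algebra k S]
    [Algebra.FiniteType k S] (I : Ideal S) (hdim : ringKrullDim (S ⧸ I) = 0) :
    IsNoetherianRing (kPlus k I) := by
  have : IsNoetherianRing S := Algebra.FiniteType.isNoetherianRing k S
  have : Algebra.FiniteType k (S ⧸ I) :=
    Algebra.FiniteType.of_surjective (Ideal.Quotient.mkₐ k I) Ideal.Quotient.mk_surjective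
  have : Ring.KrullDimLE 0 (S ⧸ I) := Ring.krullDimLE_iff.mpr hdim.le
  have : IsArtinianRing (S ⧸ I) := isArtinianRing_iff_krullDimLE_zero.mpr this
  have hfin : Module.Finite k (S ⧸ I) := (Module.finite_iff_isArtinianRing k (S ⧸ I)).mpr this
  obtain ⟨T, hT⟩ := hfin.fg_top
  let σ : S ⧸ I → S := Quotient.out
  have hσ : ∀ x, Ideal.Quotient.mk I (σ x) = x := fun x => Quotient.out_eq x
  classical
  have hS : (⊤ : Submodule (kPlus k I) S).FG := by
    refine ⟨insert 1 (T.image σ), top_unique fun s _ => ?_⟩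
    -- generators of `S / I` over `k`, together with `1`, generate `S` over `k + I`
    set N := Submodule.span (kPlus k I) ((insert 1 (T.image σ) : Finset S) : Set S) with hN
    have hI : ∀ b ∈ I, b ∈ N := fun b hb => by
      have h1 : (1 : S) ∈ N := Submodule.subset_span (by simp)
      simpa [Subalgebra.smul_def] using N.smul_mem (⟨b, mem_kPlus_of_mem I hb⟩ : kPlus k I) h1
    have key : ∀ x : S ⧸ I, ∃ y ∈ N, Ideal.Quotient.mk I y = x := by
      intro x
      have hx : x ∈ Submodule.span k (T : Set (S ⧸ I)) := by rw [hT]; trivial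
      induction hx using Submodule.span_induction with
      | mem x h =>
        exact ⟨σ x, Submodule.subset_span (by
          simp only [Finset.coe_insert, Finset.coe_image]
          exact Or.inr ⟨x, h, rfl⟩), hσ x⟩
      | zero => exact ⟨0, N.zero_mem, map_zero _⟩
      | add x y _ _ hx hy =>
        obtain ⟨a, ha, rfl⟩ := hx
        obtain ⟨b, hb, rfl⟩ := hy
        exact ⟨a + b, N.add_mem ha hb, map_add _ _ _⟩
      | smul c x _ hx =>
        obtain ⟨a, ha, rfl⟩ := hx
        refine ⟨algebraMap k (kPlus k I) c • a, N.smul_mem _ ha, ?_⟩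
        rw [Subalgebra.smul_def, smul_eq_mul, map_mul, Algebra.smul_def]
        rfl
    obtain ⟨y, hy, hys⟩ := key (Ideal.Quotient.mk I s)
    have := N.add_mem hy (hI (s - y) (Ideal.Quotient.eq.mp hys.symm))
    rwa [add_sub_cancel] at this
  have hft : (⊤ : Subalgebra k (kPlus k I)).FG :=
    fg_of_fg_of_fg k (kPlus k I) S Algebra.FiniteType.out hS Subtype.val_injective
  have : Algebra.FiniteType k (kPlus k I) := ⟨hft⟩
  exact Algebra.FiniteType.isNoetherianRing k _

/-- An element of `k + I` lying in a proper ideal `P ⊇ I` lies in `I`, as its constant term must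
vanish. -/
theorem mem_of_mem_kPlus {k S : Type*} [Field k] [CommRing S] [Algebra k S] {I P : Ideal S}
    (hIP : I ≤ P) (hP : P ≠ ⊤) {b : S} (hb : b ∈ kPlus k I) (hbP : b ∈ P) : b ∈ I := by
  obtain ⟨α, c, hc, rfl⟩ := hb
  have hα : algebraMap k S α ∈ P := (P.add_mem_iff_left (hIP hc)).mp hbP
  have : α = 0 := by
    by_contra h
    exact hP (P.eq_top_of_isUnit_mem hα ((IsUnit.mk0 α h).map _))
  simpa [this] using hc

/-- In a Jacobson ring a radical, non-maximal ideal that lies in a maximal ideal `n` also lies in a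
second one, being the intersection of the maximal ideals above it. -/
theorem exists_other_maximal {S : Type*} [CommRing S] [IsJacobsonRing S] {I n : Ideal S}
    (hrad : I.IsRadical) (hmax : ¬ I.IsMaximal) (hn : n.IsMaximal) (hIn : I ≤ n) :
    ∃ n' : Ideal S, n'.IsMaximal ∧ I ≤ n' ∧ n' ≠ n := by
  by_contra! h
  have hjac : I.jacobson = I := IsJacobsonRing.out ‹_› hrad
  have : n ≤ I.jacobson := le_sInf fun P hP => (h P hP.2 hP.1).ge
  rw [hjac] at this
  exact hmax (le_antisymm hIn this ▸ hn)

/-- If some `Iⱼ` is radical with `dim S/Iⱼ = 0`, then `S` is not a depiction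
of `R = ⋂ᵢ (k + Iᵢ)`: there is a maximal ideal `n` of `S` such that `R_{n∩R}` is
noetherian but `R_{n∩R} ≠ S_n` inside the fraction field of `S`. -/
theorem stmt16 (k S : Type*) [Field k] [IsAlgClosed k] [CommRing S] [IsDomain S]
    [Algebra k S] [Algebra.FiniteType k S]
    (m : ℕ) (I : Fin m → Ideal S)
    (hproper : ∀ i, I i ≠ ⊤) (hnz : ∀ i, I i ≠ ⊥) (hnmax : ∀ i, ¬ (I i).IsMaximal)
    (hcop : ∀ i j, i ≠ j → I i ⊔ I j = ⊤) (hrad : ∀ i, (I i).IsRadical)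
    (R : Subalgebra k S) (hR : R = ⨅ i, kPlus k (I i))
    (j : Fin m) (hdim : ringKrullDim (S ⧸ I j) = 0) :
    ∃ (n : Ideal S) (hn : n.IsMaximal),
      IsNoetherianRing
        (Localization
          (@Ideal.primeCompl _ _ (n.comap R.val)
            (Ideal.IsPrime.comap R.val (hK := hn.isPrime)))) ∧
      locOf R n ≠ locSAt S n := by
  obtain ⟨n, hn, hIn⟩ := Ideal.exists_le_maximal (I j) (hproper j)
  have hRA : R ≤ kPlus k (I j) := hR ▸ iInf_le _ j
  refine ⟨n, hn, ?_, ?_⟩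
  · have hnoeth := isNoetherianRing_kPlus (k := k) (I j) hdim
    have htop : (⨅ i ∈ Finset.univ.erase j, I i) ⊔ I j = ⊤ :=
      Ideal.iInf_sup_eq_top fun i hi => hcop i j (Finset.ne_of_mem_erase hi)
    obtain ⟨f, hf, e, he, hfe⟩ := Submodule.mem_sup.mp ((Ideal.eq_top_iff_one _).mp htop)
    have hfi : ∀ i, i ≠ j → f ∈ I i := fun i hi => by
      simp only [Submodule.mem_iInf] at hf
      exact hf i (Finset.mem_erase.mpr ⟨hi, Finset.mem_univ i⟩)
    have hfk : f ∈ kPlus k (I j) :=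
      ⟨1, -e, neg_mem he, by rw [map_one, ← hfe]; ring⟩
    have hfA : ∀ a ∈ kPlus k (I j), f * a ∈ R := fun a ha => by
      rw [hR, Algebra.mem_iInf]
      intro i
      by_cases hi : i = j
      · subst hi
        exact mul_mem hfk ha
      · exact mem_kPlus_of_mem _ (Ideal.mul_mem_right _ _ (hfi i hi))
    have hfn : f ∉ n := fun h =>
      hn.ne_top ((Ideal.eq_top_iff_one _).mpr (hfe ▸ n.add_mem h (hIn he)))
    have := hn.isPrime
    exact isNoetherianRing_localization_of_le hRA n f hfn hfA
  · intro heq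
    have : IsJacobsonRing S := isJacobsonRing_of_finiteType (A := k)
    obtain ⟨n', hn', hIn', hne⟩ := exists_other_maximal (hrad j) (hnmax j) hn hIn
    obtain ⟨s, hs', hs⟩ := SetLike.not_le_iff_exists.mp
      fun hle => hne (hn'.eq_of_le hn.ne_top hle)
    have hmem : 1 / algebraMap S (FractionRing S) s ∈ locSAt S n := ⟨1, s, hs, by simp⟩
    rw [← heq] at hmem
    obtain ⟨a, b, -, hb, hbn, hab⟩ := hmem
    have hne0 : ∀ t, t ∉ n → algebraMap S (FractionRing S) t ≠ 0 := fun t ht h0 =>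
      ht (by rw [(IsFractionRing.to_map_eq_zero_iff).mp h0]; exact n.zero_mem)
    have hbas : b = a * s := by
      rw [div_eq_div_iff (hne0 s hs) (hne0 b hbn), one_mul, ← map_mul] at hab
      exact IsFractionRing.injective S (FractionRing S) hab
    exact hbn (hIn (mem_of_mem_kPlus hIn' hn'.ne_top (hRA hb)
      (hbas ▸ n'.mul_mem_left a hs')))
end

section
/- Suppose I is a proper nonzero non-maximal radical ideal of S, and set R = k + I. Then the following are equivalent: (1) the Krull dimension of S/I is at least 1; (2) R is nonnoetherian; (3) S is a depiction of R, i.e., for every prime ideal p of R there exists a prime ideal q of S with q ∩ R = p, for every maximal ideal n of S the localization R_{n∩R} equals S_n (as subrings of the fraction field of S) if and only if R_{n∩R} is noetherian, and there exists a maximal ideal n of S with R_{n∩R} = S_n. -/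
section Helpers

variable {k S : Type*} [Field k] [CommRing S] [Algebra k S] {I : Ideal S}

theorem mem_kPlus_iff {s : S} :
    s ∈ kPlus k I ↔ ∃ (α : k) (b : S), b ∈ I ∧ s = algebraMap k S α + b := Iff.rfl

theorem mem_kPlus_of_mem_s18 {s : S} (hs : s ∈ I) : s ∈ kPlus k I :=
  ⟨0, s, hs, by simp⟩

/-- An element of `k` lying in a proper ideal of `S` is zero. -/
theorem eq_zero_of_algebraMap_mem {n : Ideal S} (hn : n ≠ ⊤) {α : k}
    (h : algebraMap k S α ∈ n) : α = 0 := by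
  by_contra hα
  exact hn (Ideal.eq_top_of_isUnit_mem _ h ((IsUnit.mk0 α hα).map (algebraMap k S)))

/-- The contraction to `k + I` of a proper ideal containing `I` is `I`. -/
theorem mem_of_mem_kPlus_of_mem {n : Ideal S} (hn : n ≠ ⊤) (hI : I ≤ n) {s : S}
    (hs : s ∈ kPlus k I) (hsn : s ∈ n) : s ∈ I := by
  obtain ⟨α, b, hb, rfl⟩ := hs
  have : α = 0 := eq_zero_of_algebraMap_mem hn ((n.add_mem_iff_left (hI hb)).1 hsn)
  simpa [this] using hb

theorem isNoetherianRing_of_finite_quotient [Algebra.FiniteType k S]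
    [Module.Finite k (S ⧸ I)] : IsNoetherianRing (kPlus k I) := by
  have hfin : (⊤ : Submodule (kPlus k I) S).FG := by
    obtain ⟨t, ht⟩ := (Module.finite_def.1 ‹Module.Finite k (S ⧸ I)›)
    classical
    choose f hf using Ideal.Quotient.mk_surjective (I := I)
    refine ⟨insert 1 (t.image f), top_le_iff.1 fun s _ => ?_⟩
    set N := Submodule.span (kPlus k I) ((insert 1 (t.image f) : Finset S) : Set S) with hN
    have hIN : ∀ b ∈ I, b ∈ N := fun b hb => by
      have h1 : (1 : S) ∈ N := Submodule.subset_span (by simp)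
      simpa [Subalgebra.smul_def] using N.smul_mem ⟨b, mem_kPlus_of_mem_s18 hb⟩ h1
    have key : ∀ x ∈ Submodule.span k (t : Set (S ⧸ I)), f x ∈ N := by
      -- membership in `N` only depends on the class modulo `I`, since `I ⊆ N`
      have hcong : ∀ u v : S, Ideal.Quotient.mk I u = Ideal.Quotient.mk I v → v ∈ N → u ∈ N := by
        intro u v h hv
        have := N.add_mem (hIN _ (Ideal.Quotient.eq.1 h)) hv
        simpa using this
      intro x hx
      induction hx using Submodule.span_induction with
      | mem x h =>
        exact Submodule.subset_span (by
          simp only [Finset.coe_insert, Finset.coe_image]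
          exact Or.inr ⟨x, h, rfl⟩)
      | zero => exact hcong _ 0 (by simp [hf]) N.zero_mem
      | add x y _ _ hx hy => exact hcong _ (f x + f y) (by simp [hf]) (N.add_mem hx hy)
      | smul α x _ hx =>
        refine hcong _ (algebraMap k S α * f x) ?_ ?_
        · rw [hf, map_mul, hf, Algebra.smul_def]; rfl
        · exact N.smul_mem (algebraMap k (kPlus k I) α) hx
    have h1 := N.add_mem (hIN (s - f (Ideal.Quotient.mk I s))
      (Ideal.Quotient.eq.1 (hf _).symm)) (key (Ideal.Quotient.mk I s) (ht ▸ Submodule.mem_top))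
    simpa using h1
  have hfg : (⊤ : Subalgebra k (kPlus k I)).FG :=
    fg_of_fg_of_fg k (kPlus k I) S Algebra.FiniteType.out hfin Subtype.val_injective
  have : Algebra.FiniteType k (kPlus k I) := ⟨hfg⟩
  exact Algebra.FiniteType.isNoetherianRing k _

/-- The ideal `aV` of `k + I`, where `a ∈ I` and `V` is a `k`-subspace of `S` containing `I`,
given by its image in `S ⧸ I`. -/
def mulIdeal (a : S) (V : Submodule k (S ⧸ I)) : Ideal (kPlus k I) where
  carrier := {r | ∃ s : S, Ideal.Quotient.mk I s ∈ V ∧ (r : S) = a * s}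
  zero_mem' := ⟨0, by simp, by simp⟩
  add_mem' := by
    rintro x y ⟨s, hs, hx⟩ ⟨t, ht, hy⟩
    exact ⟨s + t, by simpa using V.add_mem hs ht, by simp [hx, hy, mul_add]⟩
  smul_mem' := by
    rintro ⟨_, α, b, hb, rfl⟩ x ⟨s, hs, hx⟩
    refine ⟨(algebraMap k S α + b) * s, ?_, ?_⟩
    · have : Ideal.Quotient.mk I ((algebraMap k S α + b) * s) = α • Ideal.Quotient.mk I s := by
        rw [map_mul, map_add, Ideal.Quotient.eq_zero_iff_mem.2 hb, add_zero, Algebra.smul_def]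
        rfl
      rw [this]
      exact V.smul_mem _ hs
    · simp only [smul_eq_mul, MulMemClass.coe_mul, hx]
      ring

theorem mem_mulIdeal {a : S} {V : Submodule k (S ⧸ I)} {r : kPlus k I} :
    r ∈ mulIdeal a V ↔ ∃ s : S, Ideal.Quotient.mk I s ∈ V ∧ (r : S) = a * s := Iff.rfl

/-- The map `V ↦ aV`, followed by extension to the localization, is strictly monotone from
subspaces of `S ⧸ I` to ideals of the localization: an element of `k + I` outside `I` acts on
`S ⧸ I` as a nonzero scalar, so denominators do no harm. -/
theorem finite_quotient_of_isNoetherianRing_localization [IsDomain S] (hnz : I ≠ ⊥)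
    (M : Submonoid (kPlus k I)) (hM : ∀ m ∈ M, (m : S) ∉ I)
    (h : IsNoetherianRing (Localization M)) : Module.Finite k (S ⧸ I) := by
  obtain ⟨a, haI, ha0⟩ := Submodule.exists_mem_ne_zero_of_ne_bot hnz
  let F : Submodule k (S ⧸ I) → Ideal (Localization M) := fun V =>
    (mulIdeal a V).map (algebraMap (kPlus k I) (Localization M))
  have hle : ∀ V W, F V ≤ F W → V ≤ W := by
    intro V W hVW x hx
    obtain ⟨s, rfl⟩ := Ideal.Quotient.mk_surjective x
    have hr : (⟨a * s, mem_kPlus_of_mem_s18 (I.mul_mem_right _ haI)⟩ : kPlus k I) ∈ mulIdeal a V :=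
      ⟨s, hx, rfl⟩
    have hmem := hVW (Ideal.mem_map_of_mem _ hr)
    rw [IsLocalization.algebraMap_mem_map_algebraMap_iff M] at hmem
    obtain ⟨⟨_, α, b, hb, rfl⟩, hmM, t, ht, hEq⟩ := hmem
    have hα : α ≠ 0 := fun h0 => hM _ hmM (by simpa [h0] using hb)
    have hst : (algebraMap k S α + b) * s = t := by
      apply mul_left_cancel₀ ha0
      rw [← hEq]
      simp only [MulMemClass.coe_mul]
      ring
    have : α • Ideal.Quotient.mk I s = Ideal.Quotient.mk I t := by
      rw [← hst, map_mul, map_add, Ideal.Quotient.eq_zero_iff_mem.2 hb, add_zero,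
        Algebra.smul_def]
      rfl
    exact (W.smul_mem_iff hα).1 (this ▸ ht)
  have hmono : StrictMono F := by
    intro V W hVW
    refine lt_of_le_not_ge (Ideal.map_mono ?_) fun hge => hVW.not_ge (hle _ _ hge)
    rintro r ⟨s, hs, hr⟩
    exact ⟨s, hVW.le hs, hr⟩
  have : WellFoundedGT (Ideal (Localization M)) := isNoetherian_iff'.1 h
  have : WellFoundedGT (Submodule k (S ⧸ I)) := hmono.wellFoundedGT
  have : IsNoetherian k (S ⧸ I) := isNoetherian_iff'.2 this
  infer_instance

theorem finite_quotient_iff [Algebra.FiniteType k S] (hproper : I ≠ ⊤) :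
    Module.Finite k (S ⧸ I) ↔ ¬ 1 ≤ ringKrullDim (S ⧸ I) := by
  have : Nontrivial (S ⧸ I) := Ideal.Quotient.nontrivial_iff.2 hproper
  have : IsNoetherianRing S := Algebra.FiniteType.isNoetherianRing k S
  have h1 : ¬ 1 ≤ ringKrullDim (S ⧸ I) ↔ Ring.KrullDimLE 0 (S ⧸ I) := by
    rw [Ring.krullDimLE_iff, not_le]
    exact ENat.WithBot.lt_add_one_iff (m := 0)
  rw [h1, Module.finite_iff_isArtinianRing, isArtinianRing_iff_isNoetherianRing_krullDimLE_zero]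
  exact and_iff_right inferInstance

theorem exists_isPrime_comap_eq (hproper : I ≠ ⊤) (p : Ideal (kPlus k I)) (hp : p.IsPrime) :
    ∃ q : Ideal S, q.IsPrime ∧ q.comap (kPlus k I).val = p := by
  by_cases hIp : ∀ a (ha : a ∈ I), (⟨a, mem_kPlus_of_mem_s18 ha⟩ : kPlus k I) ∈ p
  · obtain ⟨n, hn, hIn⟩ := Ideal.exists_le_maximal I hproper
    refine ⟨n, hn.isPrime, le_antisymm ?_ ?_⟩
    · exact fun r hr => hIp r.1 (mem_of_mem_kPlus_of_mem hn.ne_top hIn r.2 hr)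
    · rintro ⟨_, α, b, hb, rfl⟩ hr
      have hα : algebraMap k (kPlus k I) α ∈ p := by
        have := p.sub_mem hr (hIp b hb)
        convert this using 1
        ext
        simp
      have hα0 : α = 0 := by
        by_contra h0
        exact hp.ne_top (Ideal.eq_top_of_isUnit_mem _ hα
          ((IsUnit.mk0 α h0).map (algebraMap k (kPlus k I))))
      change algebraMap k S α + b ∈ n
      simpa [hα0] using hIn hb
  · push Not at hIp
    obtain ⟨a, ha, hap⟩ := hIp
    let A : S → kPlus k I := fun s => ⟨a * s, mem_kPlus_of_mem_s18 (I.mul_mem_right _ ha)⟩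
    let a' : kPlus k I := ⟨a, mem_kPlus_of_mem_s18 ha⟩
    let q : Ideal S :=
      { carrier := {s | A s ∈ p}
        zero_mem' := by
          have : A 0 = 0 := by ext; simp [A]
          change A 0 ∈ p
          rw [this]; exact p.zero_mem
        add_mem' := by
          intro s t hs ht
          have : A (s + t) = A s + A t := by ext; simp [A, mul_add]
          change A (s + t) ∈ p
          rw [this]; exact p.add_mem hs ht
        smul_mem' := by
          intro t s hs
          have : a' * A (t * s) = A t * A s := by ext; simp only [A, a', MulMemClass.coe_mul]; ring
          exact (hp.mem_or_mem (this ▸ p.mul_mem_left (A t) hs : a' * A (t * s) ∈ p)).resolve_left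
            hap }
    have hqmem : ∀ s, s ∈ q ↔ A s ∈ p := fun s => Iff.rfl
    refine ⟨q, ⟨?_, ?_⟩, ?_⟩
    · rw [Ideal.ne_top_iff_one, hqmem]
      have : A 1 = a' := by ext; simp [A, a']
      rwa [this]
    · intro s t hst
      have : A s * A t = a' * A (s * t) := by ext; simp only [A, a', MulMemClass.coe_mul]; ring
      exact hp.mem_or_mem (this ▸ p.mul_mem_left a' hst : A s * A t ∈ p)
    · ext r
      have : A r = a' * r := by ext; simp [A, a']
      rw [Ideal.mem_comap, hqmem, Subalgebra.coe_val, this]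
      exact ⟨fun h => (hp.mem_or_mem h).resolve_left hap, fun h => p.mul_mem_left _ h⟩

theorem locOf_eq_locSAt [IsDomain S] {n : Ideal S} (hn : n.IsPrime) (hIn : ¬ I ≤ n) :
    locOf (kPlus k I) n = locSAt S n := by
  obtain ⟨a, ha, han⟩ := SetLike.not_le_iff_exists.1 hIn
  ext x
  constructor
  · rintro ⟨s, t, -, -, ht, rfl⟩
    exact ⟨s, t, ht, rfl⟩
  · rintro ⟨s, t, ht, rfl⟩
    refine ⟨a * s, a * t, mem_kPlus_of_mem_s18 (I.mul_mem_right _ ha),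
      mem_kPlus_of_mem_s18 (I.mul_mem_right _ ha), fun h => (hn.mem_or_mem h).elim han ht, ?_⟩
    have ha0 : algebraMap S (FractionRing S) a ≠ 0 := by
      rw [Ne, FaithfulSMul.algebraMap_eq_zero_iff]
      rintro rfl
      exact han n.zero_mem
    rw [map_mul, map_mul, mul_div_mul_left _ _ ha0]

theorem locOf_ne_locSAt [IsDomain S] (hnmax : ¬ I.IsMaximal) {n : Ideal S} (hn : n.IsMaximal)
    (hIn : I ≤ n) : locOf (kPlus k I) n ≠ locSAt S n := by
  intro h
  have hne : ¬ n ≤ I := fun h' => hnmax (le_antisymm hIn h' ▸ hn)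
  obtain ⟨s, hsn, hsI⟩ := SetLike.not_le_iff_exists.1 hne
  have hs : algebraMap S (FractionRing S) s ∈ locSAt S n :=
    ⟨s, 1, fun h1 => hn.ne_top ((Ideal.eq_top_iff_one _).2 h1), by simp⟩
  rw [← h] at hs
  obtain ⟨x, y, hx, ⟨β, c, hc, rfl⟩, hyn, hEq⟩ := hs
  have hy0 : algebraMap S (FractionRing S) (algebraMap k S β + c) ≠ 0 := by
    rw [Ne, FaithfulSMul.algebraMap_eq_zero_iff]
    intro h0
    exact hyn (h0 ▸ n.zero_mem)
  rw [eq_div_iff hy0, ← map_mul] at hEq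
  have hsx := FaithfulSMul.algebraMap_injective S (FractionRing S) hEq
  -- the numerator lies in `n ∩ (k + I) = I`
  have hxI : x ∈ I := mem_of_mem_kPlus_of_mem hn.ne_top hIn hx (hsx ▸ n.mul_mem_right _ hsn)
  have hβ : β ≠ 0 := by
    rintro rfl
    exact hyn (by simpa using hIn hc)
  have h1 : algebraMap k S β * s ∈ I := by
    have : algebraMap k S β * s = x - s * c := by rw [← hsx]; ring
    rw [this]
    exact I.sub_mem hxI (I.mul_mem_left _ hc)
  exact hsI ((Ideal.unit_mul_mem_iff_mem I ((IsUnit.mk0 β hβ).map (algebraMap k S))).1 h1)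

/-- Away from `I` the local ring `R_{n ∩ R}` is `S_n`, hence noetherian. -/
theorem isNoetherianRing_localization [IsDomain S] [IsNoetherianRing S] {n : Ideal S}
    (hn : n.IsPrime) (hIn : ¬ I ≤ n) (M : Submonoid (kPlus k I))
    (hM : ∀ m : kPlus k I, m ∈ M ↔ (m : S) ∉ n) : IsNoetherianRing (Localization M) := by
  obtain ⟨a, ha, han⟩ := SetLike.not_le_iff_exists.1 hIn
  let L := Localization.AtPrime n
  have hmap : ∀ r : kPlus k I, algebraMap (kPlus k I) L r = algebraMap S L (r : S) := fun r =>
    IsScalarTower.algebraMap_apply (kPlus k I) S L r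
  have hloc : IsLocalization M L := by
    refine ⟨?_, ?_, ?_⟩
    · rintro ⟨m, hm⟩
      rw [hmap]
      exact IsLocalization.map_units L (⟨m, (hM m).1 hm⟩ : n.primeCompl)
    · intro z
      obtain ⟨⟨s, t, ht⟩, hz⟩ := IsLocalization.surj n.primeCompl z
      refine ⟨⟨⟨a * s, mem_kPlus_of_mem_s18 (I.mul_mem_right _ ha)⟩,
        ⟨⟨a * t, mem_kPlus_of_mem_s18 (I.mul_mem_right _ ha)⟩,
          (hM _).2 fun h => (hn.mem_or_mem h).elim han ht⟩⟩, ?_⟩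
      simp only [hmap, map_mul]
      rw [← hz]
      ring
    · intro x y hxy
      rw [hmap, hmap] at hxy
      have := IsLocalization.injective L n.primeCompl_le_nonZeroDivisors hxy
      exact ⟨1, by rw [Subtype.ext this]⟩
  have : IsNoetherianRing L := IsLocalization.isNoetherianRing n.primeCompl L inferInstance
  exact isNoetherianRing_of_ringEquiv L
    (IsLocalization.algEquiv M L (Localization M)).toRingEquiv

theorem exists_isMaximal_not_le [IsDomain S] [Algebra.FiniteType k S] (hnz : I ≠ ⊥) :
    ∃ n : Ideal S, n.IsMaximal ∧ ¬ I ≤ n := by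
  by_contra! h
  have : IsJacobsonRing S := isJacobsonRing_of_finiteType (A := k)
  have hj : (⊥ : Ideal S).jacobson = ⊥ :=
    IsJacobsonRing.out this Ideal.isPrime_bot.isRadical
  exact hnz (le_bot_iff.1 (hj ▸ le_sInf fun n hn => h n hn.2))

end Helpers

/-- If `I` is a proper nonzero non-maximal radical ideal of `S` and
`R = k + I`, then the following are equivalent: (1) `dim S/I ≥ 1`; (2) `R` is
nonnoetherian; (3) `S` is a depiction of `R`, i.e. `q ↦ q ∩ R` is surjective
`Spec S → Spec R`, for every maximal ideal `n` of `S` one has `R_{n∩R} = S_n` (inside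
`Frac S`) iff `R_{n∩R}` is noetherian, and some maximal ideal `n` of `S` satisfies
`R_{n∩R} = S_n`. -/
theorem stmt18 (k S : Type*) [Field k] [IsAlgClosed k] [CommRing S] [IsDomain S]
    [Algebra k S] [Algebra.FiniteType k S]
    (I : Ideal S) (hproper : I ≠ ⊤) (hnz : I ≠ ⊥) (hnmax : ¬ I.IsMaximal)
    (hrad : I.IsRadical)
    (R : Subalgebra k S) (hR : R = kPlus k I) :
    (1 ≤ ringKrullDim (S ⧸ I) ↔ ¬ IsNoetherianRing R) ∧
    (¬ IsNoetherianRing R ↔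
      ((∀ p : Ideal R, p.IsPrime → ∃ q : Ideal S, q.IsPrime ∧ q.comap R.val = p) ∧
       (∀ (n : Ideal S) (hn : n.IsMaximal),
         locOf R n = locSAt S n ↔
         IsNoetherianRing
           (Localization
             (@Ideal.primeCompl _ _ (n.comap R.val)
               (Ideal.IsPrime.comap R.val (hK := hn.isPrime))))) ∧
       (∃ n : Ideal S, n.IsMaximal ∧ locOf R n = locSAt S n))) := by
  subst hR
  have hNS : IsNoetherianRing S := Algebra.FiniteType.isNoetherianRing k S
  have hfin := finite_quotient_iff (k := k) hproper
  have hloc : ∀ (n : Ideal S) (hn : n.IsMaximal), I ≤ n → IsNoetherianRing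
      (Localization (@Ideal.primeCompl _ _ (n.comap (kPlus k I).val)
        (Ideal.IsPrime.comap (kPlus k I).val (hK := hn.isPrime)))) → Module.Finite k (S ⧸ I) :=
    fun n hn hIn h => finite_quotient_of_isNoetherianRing_localization hnz
      (@Ideal.primeCompl _ _ (n.comap (kPlus k I).val)
        (Ideal.IsPrime.comap (kPlus k I).val (hK := hn.isPrime)))
      (fun m hm hmI => hm (hIn hmI)) h
  have hlocN : ∀ (n : Ideal S) (hn : n.IsMaximal), IsNoetherianRing (kPlus k I) →
      IsNoetherianRing (Localization (@Ideal.primeCompl _ _ (n.comap (kPlus k I).val)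
        (Ideal.IsPrime.comap (kPlus k I).val (hK := hn.isPrime)))) :=
    fun n hn h => IsLocalization.isNoetherianRing (@Ideal.primeCompl _ _ (n.comap (kPlus k I).val)
      (Ideal.IsPrime.comap (kPlus k I).val (hK := hn.isPrime))) _ h
  obtain ⟨n₀, hn₀, hIn₀⟩ := Ideal.exists_le_maximal I hproper
  have hnoeth : IsNoetherianRing (kPlus k I) ↔ Module.Finite k (S ⧸ I) :=
    ⟨fun h => hloc n₀ hn₀ hIn₀ (hlocN n₀ hn₀ h),
      fun h => isNoetherianRing_of_finite_quotient⟩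
  refine ⟨by rw [hnoeth, hfin, not_not], fun h => ⟨exists_isPrime_comap_eq hproper, ?_, ?_⟩, ?_⟩
  · intro n hn
    by_cases hIn : I ≤ n
    · exact iff_of_false (locOf_ne_locSAt hnmax hn hIn)
        fun hN => h (hnoeth.2 (hloc n hn hIn hN))
    · exact iff_of_true (locOf_eq_locSAt hn.isPrime hIn)
        (isNoetherianRing_localization hn.isPrime hIn (@Ideal.primeCompl _ _ (n.comap (kPlus k I).val)
          (Ideal.IsPrime.comap (kPlus k I).val (hK := hn.isPrime))) fun m => Iff.rfl)
  · obtain ⟨n, hn, hIn⟩ := exists_isMaximal_not_le (k := k) hnz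
    exact ⟨n, hn, locOf_eq_locSAt hn.isPrime hIn⟩
  · rintro ⟨-, h, -⟩ hN
    exact locOf_ne_locSAt hnmax hn₀ hIn₀
      ((h n₀ hn₀).2 (hlocN n₀ hn₀ hN))
end
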